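/- Let 0 ≤ α < 2 and β, μ ∈ ℝ with μ < μ(α+β), where μ(δ) := (1−δ)²/4. Set κ_α := (2−α)/2 and ν := √(μ(α+β) − μ)/κ_α. Let j > 0 and define φ(x) := x^{(1−α−β)/2} J_ν(j x^{κ_α}) for x ∈ (0,1). Then for every x ∈ (0,1), x^{2α} φ''''(x) + ρ₁ x^{2α−1} φ'''(x) + ρ₂ x^{2α−2} φ''(x) + ρ₃ x^{2α−3} φ'(x) + (ρ₄/x^{4−2α}) φ(x) = κ_α⁴ j⁴ φ(x), where ρ₁ = 4α + 2β, ρ₂ = (2α+β)(2α+β−1) + (α+β)(α−1) + 2μ, ρ₃ = [(α+β)(α−1) + 2μ](2α+β−2), and ρ₄ = μ[(α−2)(2α+β−3) + μ]. -/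

import Mathlib

/-!
Write `J_ν(y) = (y/2)^ν G_ν((y/2)²)` with the entire function
`G_ν(t) = ∑ (-1)^m t^m / (m! Γ(m+ν+1))` (`besselJ_eq`). It satisfies `G_ν' = -G_{ν+1}`
(`hasDerivAt_besselG`) and the contiguous relation `t G_{ν+2} - (ν+1) G_{ν+1} + G_ν = 0`
(`besselG_recurrence`).

Put `p = (1-α-β)/2 + κν`, `w = (j/2)² x^{2κ}`, `A = C x^p G_ν(w)` (which is `φ` when
`C = (j/2)^ν`) and `B = C x^p w G_{ν+1}(w)`. The two facts above turn into a first-order system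
for the Euler operator `θ = x d/dx`: `θA = pA - 2κB`, `θB = (p - 2κν)B + 2κwA`, `θw = 2κw`.
So every derivative of `φ` is a combination of `A` and `B` with coefficients polynomial in `w`,
divided by a power of `x` (`hasDerivAt_step`). After multiplication by `x^{4-2α}` the claim is
that `x⁴φ'''' + ρ₁x³φ''' + ρ₂x²φ'' + ρ₃xφ' + ρ₄φ = 16κ⁴w²φ`, a polynomial identity.
-/

open Set

/-- The Bessel function of the first kind `J_ν`, defined by its power series. -/
noncomputable def besselJ (ν : ℝ) (x : ℝ) : ℝ :=
  ∑' m : ℕ, ((-1 : ℝ) ^ m / ((m.factorial : ℝ) * Real.Gamma ((m : ℝ) + ν + 1)))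
    * (x / 2) ^ (2 * (m : ℝ) + ν)

/-- The entire function `G_ν` with `J_ν(y) = (y/2)^ν G_ν((y/2)²)`. -/
noncomputable def besselG (ν t : ℝ) : ℝ :=
  ∑' m : ℕ, ((-1 : ℝ) ^ m / ((m.factorial : ℝ) * Real.Gamma ((m : ℝ) + ν + 1))) * t ^ m

lemma gamma_le_gamma_nat_add {ν : ℝ} (hν : 0 ≤ ν) (m : ℕ) :
    Real.Gamma (ν + 1) ≤ Real.Gamma ((m : ℝ) + ν + 1) := by
  induction m with
  | zero => simp
  | succ k ih =>
    have hk : (0 : ℝ) ≤ k := Nat.cast_nonneg k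
    have h : Real.Gamma (((k + 1 : ℕ) : ℝ) + ν + 1)
        = ((k : ℝ) + ν + 1) * Real.Gamma ((k : ℝ) + ν + 1) := by
      rw [← Real.Gamma_add_one (by positivity)]
      push_cast
      congr 1
      ring
    rw [h]
    have hpos : 0 < Real.Gamma ((k : ℝ) + ν + 1) := Real.Gamma_pos_of_pos (by positivity)
    nlinarith

lemma abs_besselG_coeff_le {ν : ℝ} (hν : 0 ≤ ν) (m : ℕ) :
    |(-1 : ℝ) ^ m / ((m.factorial : ℝ) * Real.Gamma ((m : ℝ) + ν + 1))|
      ≤ (Real.Gamma (ν + 1))⁻¹ / (m.factorial : ℝ) := by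
  have h0 : 0 < Real.Gamma (ν + 1) := Real.Gamma_pos_of_pos (by positivity)
  have h1 := gamma_le_gamma_nat_add hν m
  have hf : (0 : ℝ) < m.factorial := by exact_mod_cast m.factorial_pos
  have h2 : 0 < Real.Gamma ((m : ℝ) + ν + 1) := h0.trans_le h1
  rw [abs_div, abs_pow, abs_neg, abs_one, one_pow, abs_of_pos (by positivity),
    inv_eq_one_div, div_div, mul_comm (m.factorial : ℝ)]
  gcongr

lemma summable_besselG {ν : ℝ} (hν : 0 ≤ ν) (t : ℝ) :
    Summable fun m : ℕ =>
      ((-1 : ℝ) ^ m / ((m.factorial : ℝ) * Real.Gamma ((m : ℝ) + ν + 1))) * t ^ m := by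
  refine Summable.of_norm_bounded
    ((Real.summable_pow_div_factorial |t|).mul_left (Real.Gamma (ν + 1))⁻¹) fun m => ?_
  rw [Real.norm_eq_abs, abs_mul, abs_pow]
  calc _ ≤ (Real.Gamma (ν + 1))⁻¹ / (m.factorial : ℝ) * |t| ^ m := by
        gcongr
        exact abs_besselG_coeff_le hν m
    _ = _ := by ring

lemma hasDerivAt_besselG {ν : ℝ} (hν : 0 ≤ ν) (t : ℝ) :
    HasDerivAt (besselG ν) (-besselG (ν + 1) t) t := by
  set c : ℕ → ℝ := fun m =>
    (-1 : ℝ) ^ m / ((m.factorial : ℝ) * Real.Gamma ((m : ℝ) + ν + 1)) with hc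
  set R : ℝ := |t| + 1 with hR
  have hR0 : 0 ≤ R := by positivity
  have hu : Summable fun m : ℕ =>
      (Real.Gamma (ν + 1))⁻¹ / (m.factorial : ℝ) * ((m : ℝ) * R ^ (m - 1)) := by
    rw [← summable_nat_add_iff 1]
    refine ((Real.summable_pow_div_factorial R).mul_left (Real.Gamma (ν + 1))⁻¹).congr
      fun m => ?_
    have hf : (m.factorial : ℝ) ≠ 0 := by exact_mod_cast m.factorial_ne_zero
    rw [Nat.factorial_succ, Nat.add_sub_cancel]
    push_cast
    have : (m : ℝ) + 1 ≠ 0 := by positivity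
    field_simp
  have htR : t ∈ Metric.ball (0 : ℝ) R := by simp [hR]
  have key := hasDerivAt_tsum_of_isPreconnected (g := fun m y => c m * y ^ m)
    (g' := fun m y => c m * ((m : ℝ) * y ^ (m - 1))) hu Metric.isOpen_ball
    (convex_ball (0 : ℝ) R).isPreconnected
    (fun m y _ => (hasDerivAt_pow m y).const_mul (c m))
    (fun m y hy => by
      have hy' : |y| ≤ R := by simpa using (mem_ball_zero_iff.mp hy).le
      rw [Real.norm_eq_abs, abs_mul, abs_mul, abs_pow, Nat.abs_cast]
      gcongr
      exact abs_besselG_coeff_le hν m) htR (summable_besselG hν t) htR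
  refine key.congr_deriv ?_
  have hs : Summable fun m : ℕ => c m * ((m : ℝ) * t ^ (m - 1)) := by
    refine Summable.of_norm_bounded hu fun m => ?_
    have ht' : |t| ≤ R := by simp [hR]
    rw [Real.norm_eq_abs, abs_mul, abs_mul, abs_pow, Nat.abs_cast]
    gcongr
    exact abs_besselG_coeff_le hν m
  rw [hs.tsum_eq_zero_add, besselG, ← tsum_neg]
  simp only [CharP.cast_eq_zero, zero_mul, mul_zero, zero_add, Nat.add_sub_cancel]
  refine tsum_congr fun m => ?_
  have hf : (m.factorial : ℝ) ≠ 0 := by exact_mod_cast m.factorial_ne_zero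
  have hm : (m : ℝ) + 1 ≠ 0 := by positivity
  have hg : Real.Gamma ((m : ℝ) + (ν + 1) + 1) ≠ 0 :=
    (Real.Gamma_pos_of_pos (by positivity)).ne'
  have e : ((m + 1 : ℕ) : ℝ) + ν + 1 = (m : ℝ) + (ν + 1) + 1 := by push_cast; ring
  simp only [hc]
  rw [e, Nat.factorial_succ]
  push_cast
  field_simp
  ring

/-- The contiguous relation, equivalent to `J_{ν+2}(y) - (2(ν+1)/y) J_{ν+1}(y) + J_ν(y) = 0`. -/
lemma besselG_recurrence {ν : ℝ} (hν : 0 ≤ ν) (t : ℝ) :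
    t * besselG (ν + 2) t = (ν + 1) * besselG (ν + 1) t - besselG ν t := by
  have h0 := summable_besselG hν t
  have h1 := summable_besselG (by positivity : 0 ≤ ν + 1) t
  have hd := (h1.mul_left (ν + 1)).sub h0
  simp only [besselG]
  rw [← tsum_mul_left, ← tsum_mul_left, ← (h1.mul_left (ν + 1)).tsum_sub h0,
    hd.tsum_eq_zero_add]
  have hz : (ν + 1) * ((-1 : ℝ) ^ 0 / (((0 : ℕ).factorial : ℝ) *
      Real.Gamma (((0 : ℕ) : ℝ) + (ν + 1) + 1)) * t ^ 0) -
      (-1 : ℝ) ^ 0 / (((0 : ℕ).factorial : ℝ) * Real.Gamma (((0 : ℕ) : ℝ) + ν + 1)) * t ^ 0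
      = 0 := by
    have hp : 0 < Real.Gamma (ν + 1) := Real.Gamma_pos_of_pos (by positivity)
    have hν1 : ν + 1 ≠ 0 := by positivity
    simp only [pow_zero, Nat.factorial_zero, Nat.cast_one, Nat.cast_zero, zero_add, one_mul,
      mul_one]
    rw [Real.Gamma_add_one hν1]
    have := hp.ne'
    field_simp
    ring
  rw [hz, zero_add]
  refine tsum_congr fun m => ?_
  have hf : (m.factorial : ℝ) ≠ 0 := by exact_mod_cast m.factorial_ne_zero
  have hm : (m : ℝ) + 1 ≠ 0 := by positivity
  have hg : Real.Gamma ((m : ℝ) + ν + 2) ≠ 0 := (Real.Gamma_pos_of_pos (by positivity)).ne'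
  have hn : (m : ℝ) + ν + 2 ≠ 0 := by positivity
  have e1 : Real.Gamma ((m : ℝ) + (ν + 2) + 1)
      = ((m : ℝ) + ν + 2) * Real.Gamma ((m : ℝ) + ν + 2) := by
    rw [← Real.Gamma_add_one hn]
    congr 1
    ring
  have e2 : Real.Gamma (((m + 1 : ℕ) : ℝ) + (ν + 1) + 1)
      = ((m : ℝ) + ν + 2) * Real.Gamma ((m : ℝ) + ν + 2) := by
    rw [← Real.Gamma_add_one hn]
    congr 1
    push_cast
    ring
  have e3 : ((m + 1 : ℕ) : ℝ) + ν + 1 = (m : ℝ) + ν + 2 := by push_cast; ring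
  rw [e1, e2, e3, Nat.factorial_succ]
  push_cast
  field_simp
  ring

lemma besselJ_eq (ν : ℝ) {y : ℝ} (hy : 0 < y) :
    besselJ ν y = (y / 2) ^ ν * besselG ν ((y / 2) ^ 2) := by
  have h2 : 0 < y / 2 := by positivity
  rw [besselJ, besselG, ← tsum_mul_left]
  refine tsum_congr fun m => ?_
  rw [Real.rpow_add h2, Real.rpow_mul h2.le, Real.rpow_natCast]
  norm_cast
  ring

/-- The first-order system satisfied by `A = C x^p G_ν(w)`, `B = C x^p w G_{ν+1}(w)` and
`w = q x^D`; the contiguous relation eliminates `G_{ν+2}` from the derivative of `B`. -/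
lemma bessel_system {ν : ℝ} (hν : 0 ≤ ν) (C p q D : ℝ) {x : ℝ} (hx : 0 < x) :
    let w : ℝ → ℝ := fun x => q * x ^ D
    let A : ℝ → ℝ := fun x => C * x ^ p * besselG ν (w x)
    let B : ℝ → ℝ := fun x => C * x ^ p * (w x * besselG (ν + 1) (w x))
    HasDerivAt w (D * w x / x) x ∧
    HasDerivAt A ((p * A x - D * B x) / x) x ∧
    HasDerivAt B (((p - D * ν) * B x + D * w x * A x) / x) x := by
  intro w A B
  have hpow (r : ℝ) : HasDerivAt (fun y : ℝ => y ^ r) (r * x ^ r / x) x := by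
    refine (Real.hasDerivAt_rpow_const (Or.inl hx.ne')).congr_deriv ?_
    rw [Real.rpow_sub_one hx.ne']
    ring
  have hw : HasDerivAt w (D * w x / x) x := by
    refine ((hpow D).const_mul q).congr_deriv ?_
    simp only [w]
    ring
  have hC : HasDerivAt (fun y : ℝ => C * y ^ p) (C * (p * x ^ p / x)) x := (hpow p).const_mul C
  have hG0 := (hasDerivAt_besselG hν (w x)).comp x hw
  have hG1 := (hasDerivAt_besselG (by positivity : 0 ≤ ν + 1) (w x)).comp x hw
  have hrec := besselG_recurrence hν (w x)
  refine ⟨hw, ?_, ?_⟩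
  · refine (hC.mul hG0).congr_deriv ?_
    simp only [A, B, Function.comp]
    ring
  · refine (hC.mul (hw.mul hG1)).congr_deriv ?_
    simp only [A, B, Function.comp, Pi.mul_apply]
    rw [show ν + 1 + 1 = ν + 2 by ring]
    linear_combination -(C * x ^ p * D * w x / x) * hrec

/-- One differentiation of `((a₀ + a₁w) A + (b₀ + b₁w) B) / x^n`. Starting from `A` itself,
`b₁ ≠ 0` occurs first in the third derivative, so the `w²` term produced here occurs first in the
fourth, and linear coefficients suffice as input. -/
lemma hasDerivAt_step {w A B : ℝ → ℝ} {p D ν x : ℝ} (hx : 0 < x)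
    (hw : HasDerivAt w (D * w x / x) x)
    (hA : HasDerivAt A ((p * A x - D * B x) / x) x)
    (hB : HasDerivAt B (((p - D * ν) * B x + D * w x * A x) / x) x)
    (a₀ a₁ b₀ b₁ : ℝ) (n : ℕ) :
    HasDerivAt (fun y => ((a₀ + a₁ * w y) * A y + (b₀ + b₁ * w y) * B y) / y ^ n)
      ((((p - n) * a₀ + ((p - n + D) * a₁ + D * b₀) * w x + D * b₁ * w x ^ 2) * A x
        + ((p - D * ν - n) * b₀ - D * a₀ + ((p - D * ν - n + D) * b₁ - D * a₁) * w x) * B x)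
        / x ^ (n + 1)) x := by
  have hxn : HasDerivAt (fun y : ℝ => y ^ n) (n * x ^ n / x) x := by
    refine (hasDerivAt_pow n x).congr_deriv ?_
    cases n with
    | zero => simp
    | succ k =>
      rw [Nat.add_sub_cancel, pow_succ]
      have := hx.ne'
      field_simp
  refine (((((hw.const_mul a₁).const_add a₀).mul hA).add
    (((hw.const_mul b₁).const_add b₀).mul hB)).div hxn (pow_pos hx n).ne').congr_deriv ?_
  have := hx.ne'
  simp only [Pi.add_apply, Pi.mul_apply]
  field_simp
  ring

theorem stmt_2 (α β μ : ℝ) (hα0 : 0 ≤ α) (hα2 : α < 2)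
    (hμ : μ < (1 - (α + β)) ^ 2 / 4) (j : ℝ) (hj : 0 < j) :
    let κ := (2 - α) / 2
    let ν := Real.sqrt ((1 - (α + β)) ^ 2 / 4 - μ) / κ
    let φ : ℝ → ℝ := fun x => x ^ ((1 - α - β) / 2) * besselJ ν (j * x ^ κ)
    ∀ x ∈ Ioo (0:ℝ) 1,
      x ^ (2*α) * iteratedDeriv 4 φ x
        + (4*α + 2*β) * x ^ (2*α - 1) * iteratedDeriv 3 φ x
        + ((2*α+β)*(2*α+β-1) + (α+β)*(α-1) + 2*μ) * x ^ (2*α - 2) * iteratedDeriv 2 φ x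
        + (((α+β)*(α-1) + 2*μ)*(2*α+β-2)) * x ^ (2*α - 3) * deriv φ x
        + (μ*((α-2)*(2*α+β-3) + μ)) / x ^ (4 - 2*α) * φ x
        = κ ^ 4 * j ^ 4 * φ x := by
  intro κ ν φ x hx
  have hκ : 0 < κ := by simp only [κ]; linarith
  have hν : 0 ≤ ν := by positivity
  have hμν : μ = ((1 - α - β) / 2) ^ 2 - (κ * ν) ^ 2 := by
    have h1 : κ * ν = Real.sqrt ((1 - (α + β)) ^ 2 / 4 - μ) := by
      simp only [ν]
      field_simp
    rw [h1, Real.sq_sqrt (by linarith)]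
    ring
  have hακ : α = 2 - 2 * κ := by simp only [κ]; ring
  clear_value κ ν
  set a : ℝ := (1 - α - β) / 2 with ha
  have hβ : β = 1 - α - 2 * a := by rw [ha]; ring
  set p : ℝ := a + κ * ν with hp
  set w : ℝ → ℝ := fun x => (j / 2) ^ 2 * x ^ (2 * κ) with hw
  set A : ℝ → ℝ := fun x => (j / 2) ^ ν * x ^ p * besselG ν (w x) with hA
  set B : ℝ → ℝ := fun x => (j / 2) ^ ν * x ^ p * (w x * besselG (ν + 1) (w x)) with hB
  have hφ : ∀ y : ℝ, 0 < y → φ y = A y := by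
    intro y hy
    have hyκ : 0 < y ^ κ := Real.rpow_pos_of_pos hy κ
    simp only [φ, hA, hw]
    rw [besselJ_eq ν (by positivity), show j * y ^ κ / 2 = j / 2 * y ^ κ by ring,
      Real.mul_rpow (by positivity) hyκ.le, mul_pow, ← Real.rpow_mul hy.le, hp,
      Real.rpow_add hy, ← Real.rpow_natCast (y ^ κ) 2, ← Real.rpow_mul hy.le,
      show κ * ((2 : ℕ) : ℝ) = 2 * κ by push_cast; ring]
    ring
  have hwpos : w x = (j / 2) ^ 2 * x ^ (2 * κ) := rfl
  -- The system is all that is needed about `w`, `A` and `B` from here on.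
  have sys (y : ℝ) (hy : 0 < y) : HasDerivAt w (2 * κ * w y / y) y ∧
      HasDerivAt A ((p * A y - 2 * κ * B y) / y) y ∧
      HasDerivAt B (((p - 2 * κ * ν) * B y + 2 * κ * w y * A y) / y) y :=
    bessel_system hν ((j / 2) ^ ν) p ((j / 2) ^ 2) (2 * κ) hy
  clear_value w A B
  have step (y : ℝ) (hy : 0 < y) :=
    hasDerivAt_step hy (sys y hy).1 (sys y hy).2.1 (sys y hy).2.2
  have next (n : ℕ) (f : ℝ → ℝ) (h : ∀ y : ℝ, 0 < y → iteratedDeriv n φ y = f y)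
      (y f' : ℝ) (hy : 0 < y) (hf : HasDerivAt f f' y) : iteratedDeriv (n + 1) φ y = f' := by
    rw [iteratedDeriv_succ]
    have : iteratedDeriv n φ =ᶠ[nhds y] f := by
      filter_upwards [Ioi_mem_nhds hy] with z hz using h z hz
    rw [this.deriv_eq, hf.deriv]
  -- `φ` and its derivatives in the form required by `hasDerivAt_step`; the third derivative is
  -- rewritten with explicit coefficients because its `w²` coefficient vanishes.
  have d1 (y : ℝ) (hy : 0 < y) : iteratedDeriv 1 φ y
      = ((p + 0 * w y) * A y + (-(2 * κ) + 0 * w y) * B y) / y ^ 1 := by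
    refine next 0 (fun y => ((1 + 0 * w y) * A y + (0 + 0 * w y) * B y) / y ^ 0)
      (fun z hz => ?_) y _ hy ((step y hy 1 0 0 0 0).congr_deriv ?_)
    · rw [iteratedDeriv_zero, hφ z hz]
      ring
    · push_cast
      ring
  have d2 (y : ℝ) (hy : 0 < y) : iteratedDeriv 2 φ y = _ :=
    next 1 _ d1 y _ hy ((step y hy p 0 (-(2 * κ)) 0 1).congr_deriv
      (g' := ((p * (p - 1) + -(4 * κ ^ 2) * w y) * A y
        + (-(2 * κ) * (2 * p - 2 * κ * ν - 1) + 0 * w y) * B y) / y ^ 2)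
      (by push_cast; ring))
  have d3 (y : ℝ) (hy : 0 < y) := next 2 _ d2 y _ hy (step y hy _ _ _ _ 2)
  have d4 (y : ℝ) (hy : 0 < y) : iteratedDeriv 4 φ y = _ :=
    next 3 _ (fun z hz => (d3 z hz).trans (by
      show _ = ((p * (p - 1) * (p - 2) + ((p - 2 + 2 * κ) * -(4 * κ ^ 2)
          + 2 * κ * (-(2 * κ) * (2 * p - 2 * κ * ν - 1))) * w z) * A z
        + ((p - 2 * κ * ν - 2) * (-(2 * κ) * (2 * p - 2 * κ * ν - 1))
          - 2 * κ * (p * (p - 1)) + 8 * κ ^ 3 * w z) * B z) / z ^ 3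
      push_cast
      ring)) y _ hy (step y hy _ _ _ _ 3)
  have hx0 : 0 < x := hx.1
  have hX : 0 < x ^ (2 * κ) := Real.rpow_pos_of_pos hx0 _
  -- Each power of `x` in the equation is an integer power times `x^{-4κ}`, and `w = (j/2)² x^{2κ}`.
  have hpw (m : ℕ) (e : ℝ) (he : e = m - 2 * (2 * κ)) :
      x ^ e = x ^ m / (x ^ (2 * κ)) ^ 2 := by
    rw [he, Real.rpow_sub hx0, Real.rpow_natCast, ← Real.rpow_natCast (x ^ (2 * κ)) 2,
      ← Real.rpow_mul hx0.le]
    congr 2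
    push_cast
    ring
  have h4 : x ^ (4 - 2 * α) = (x ^ (2 * κ)) ^ 2 := by
    rw [← Real.rpow_natCast (x ^ (2 * κ)) 2, ← Real.rpow_mul hx0.le]
    congr 1
    push_cast
    linarith
  rw [hpw 4 (2 * α) (by push_cast; linarith), hpw 3 (2 * α - 1) (by push_cast; linarith),
    hpw 2 (2 * α - 2) (by push_cast; linarith), hpw 1 (2 * α - 3) (by push_cast; linarith), h4,
    ← iteratedDeriv_one, d4 x hx0, d3 x hx0, d2 x hx0, d1 x hx0, hφ x hx0, hwpos]
  clear_value a
  generalize x ^ (2 * κ) = X at *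
  rw [hp, hμν, hβ, hακ]
  have hx1 := hx0.ne'
  have hX1 := hX.ne'
  push_cast
  field_simp
  ring
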